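/- Let n : ℕ and let ⟨·,·⟩ denote the Minkowski bilinear form on ℝ^{n+1}. Suppose K, D, F, G, N, Γ : Fin (n+1) → ℝ satisfy ⟨K,K⟩ = −4, ⟨K,D⟩ = 0, ⟨D,D⟩ = 14, ⟨K,F⟩ = −2, ⟨D,F⟩ = 4, ⟨F,F⟩ = 0, ⟨K,G⟩ = −1, ⟨D,G⟩ = 1, ⟨G,G⟩ = −1, ⟨F,G⟩ = 0, ⟨K,N⟩ = 0, ⟨D,N⟩ = 0, ⟨F,N⟩ = 0, ⟨G,N⟩ = 1, ⟨N,N⟩ = −2, ⟨K,Γ⟩ = 4, ⟨D,Γ⟩ = 6, ⟨F,Γ⟩ = 4, ⟨G,Γ⟩ = 1, ⟨N,Γ⟩ = 0 and ⟨Γ,Γ⟩ = −2. Then Γ = −2·K + F + 2·G + N. -/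

import Mathlib

/-- The Minkowski (Lorentzian) bilinear form on `ℝ^{n+1}`:
`⟨x, y⟩ = x 0 * y 0 - ∑_{i=1}^{n} x i * y i`. -/
def mink (n : ℕ) (x y : Fin (n + 1) → ℝ) : ℝ :=
  x 0 * y 0 - ∑ i ∈ Finset.Ioi (0 : Fin (n + 1)), x i * y i

/-!
Put `E = -2K + F + 2G + N`. Then `E` and `Γ` have the same product with each of `K`, `F`, `G`, `N`
and `Γ`, so `Γ - E` is isotropic and orthogonal to `F + Γ`. As `⟨F + Γ, F + Γ⟩ = 6 > 0` and the
form is negative definite on the orthogonal complement of a positive vector, `Γ - E = 0`.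
-/

/-- The Minkowski form as a bundled bilinear form, which makes the linear-map API available
for `mink`. -/
def minkForm (n : ℕ) : LinearMap.BilinForm ℝ (Fin (n + 1) → ℝ) :=
  LinearMap.BilinForm.linMulLin (LinearMap.proj 0) (LinearMap.proj 0) -
    ∑ i ∈ Finset.Ioi 0, LinearMap.BilinForm.linMulLin (LinearMap.proj i) (LinearMap.proj i)

section Mink

variable {n : ℕ}

theorem minkForm_apply (x y : Fin (n + 1) → ℝ) : minkForm n x y = mink n x y := by
  simp [minkForm, mink, LinearMap.sum_apply]

theorem mink_comm (x y : Fin (n + 1) → ℝ) : mink n x y = mink n y x := by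
  simp only [mink, mul_comm]

theorem mink_add_left (x y z : Fin (n + 1) → ℝ) :
    mink n (x + y) z = mink n x z + mink n y z := by
  simp only [← minkForm_apply, map_add, LinearMap.add_apply]

theorem mink_sub_right (x y z : Fin (n + 1) → ℝ) :
    mink n x (y - z) = mink n x y - mink n x z := by
  simp only [← minkForm_apply, map_sub]

theorem mink_add_self (x y : Fin (n + 1) → ℝ) :
    mink n (x + y) (x + y) = mink n x x + 2 * mink n x y + mink n y y := by
  rw [mink_add_left, mink_comm x, mink_comm y, mink_add_left, mink_add_left, mink_comm y x]
  ring

theorem mink_sub_self (x y : Fin (n + 1) → ℝ) :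
    mink n (x - y) (x - y) = mink n x x - 2 * mink n x y + mink n y y := by
  rw [mink_sub_right, mink_comm _ x, mink_comm _ y, mink_sub_right, mink_sub_right, mink_comm y x]
  ring

theorem mink_self_neg_of_mink_eq_zero {m z : Fin (n + 1) → ℝ} (hm : 0 < mink n m m)
    (hmz : mink n m z = 0) (hz : z ≠ 0) : mink n z z < 0 := by
  have cauchy := Finset.sum_mul_sq_le_sq_mul_sq (Finset.Ioi 0) m z
  simp only [mink, ← pow_two, sub_pos, sub_neg, sub_eq_zero] at hm hmz ⊢
  rw [← hmz, mul_pow] at cauchy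
  have m_nonneg : 0 ≤ ∑ i ∈ Finset.Ioi 0, m i ^ 2 := Finset.sum_nonneg fun i _ ↦ sq_nonneg (m i)
  have m_zero_pos : 0 < m 0 ^ 2 := m_nonneg.trans_lt hm
  have spatial_pos : 0 < ∑ i ∈ Finset.Ioi 0, z i ^ 2 := by
    by_contra! h
    have spatial_zero : ∀ i ∈ Finset.Ioi 0, z i = 0 := by
      simpa using (Finset.sum_eq_zero_iff_of_nonneg fun i _ ↦ sq_nonneg (z i)).mp
        (h.antisymm (Finset.sum_nonneg fun i _ ↦ sq_nonneg (z i)))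
    have time_zero : z 0 = 0 := by
      rw [Finset.sum_eq_zero fun i hi ↦ by rw [spatial_zero i hi, mul_zero]] at hmz
      exact (mul_eq_zero.mp hmz).resolve_left (sq_pos_iff.mp m_zero_pos)
    exact hz <| funext fun i ↦ i.eq_zero_or_eq_succ.elim (fun hi ↦ hi ▸ time_zero)
      fun ⟨j, hj⟩ ↦ spatial_zero i (Finset.mem_Ioi.mpr (hj ▸ j.succ_pos))
  refine lt_of_mul_lt_mul_left ?_ m_zero_pos.le
  calc m 0 ^ 2 * z 0 ^ 2
      ≤ (∑ i ∈ Finset.Ioi 0, m i ^ 2) * ∑ i ∈ Finset.Ioi 0, z i ^ 2 := cauchy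
    _ < m 0 ^ 2 * ∑ i ∈ Finset.Ioi 0, z i ^ 2 := mul_lt_mul_of_pos_right hm spatial_pos

theorem eq_of_mink_eq {m x y : Fin (n + 1) → ℝ} (hm : 0 < mink n m m)
    (hmxy : mink n m x = mink n m y) (hx : mink n x x = mink n x y)
    (hy : mink n y y = mink n x y) : x = y := by
  have orthogonal : mink n m (x - y) = 0 := by
    rw [mink_sub_right, hmxy, sub_self]
  have isotropic : mink n (x - y) (x - y) = 0 := by
    rw [mink_sub_self, hx, hy]
    ring
  by_contra hne
  exact (mink_self_neg_of_mink_eq_zero hm orthogonal (sub_ne_zero.mpr hne)).ne isotropic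

end Mink

theorem case11_genus2_neg2_component_general (n : ℕ) (K F G N Γ : Fin (n + 1) → ℝ)
    (hKK : mink n K K = -4) (hKF : mink n K F = -2) (hFF : mink n F F = 0)
    (hKG : mink n K G = -1) (hGG : mink n G G = -1) (hFG : mink n F G = 0)
    (hKN : mink n K N = 0) (hFN : mink n F N = 0) (hGN : mink n G N = 1) (hNN : mink n N N = -2)
    (hKΓ : mink n K Γ = 4) (hFΓ : mink n F Γ = 4) (hGΓ : mink n G Γ = 1)
    (hNΓ : mink n N Γ = 0) (hΓΓ : mink n Γ Γ = -2) :
    Γ = -(2 • K) + F + 2 • G + N := by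
  set E := -(2 • K) + F + 2 • G + N with hE
  have mink_E (x : Fin (n + 1) → ℝ) :
      mink n x E = -2 * mink n x K + mink n x F + 2 * mink n x G + mink n x N := by
    simp only [hE, ← minkForm_apply, map_add, map_neg, two_nsmul]
    ring
  have hKE : mink n K E = 4 := by linarith [mink_E K]
  have hFE : mink n F E = 4 := by linarith [mink_E F, mink_comm F K]
  have hGE : mink n G E = 1 := by linarith [mink_E G, mink_comm G K, mink_comm G F]
  have hNE : mink n N E = 0 := by
    linarith [mink_E N, mink_comm N K, mink_comm N F, mink_comm N G]
  have hΓE : mink n Γ E = -2 := by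
    linarith [mink_E Γ, mink_comm Γ K, mink_comm Γ F, mink_comm Γ G, mink_comm Γ N]
  have hEE : mink n E E = -2 := by
    linarith [mink_E E, mink_comm E K, mink_comm E F, mink_comm E G, mink_comm E N]
  have positive : 0 < mink n (F + Γ) (F + Γ) := by linarith [mink_add_self F Γ]
  have same_product : mink n (F + Γ) Γ = mink n (F + Γ) E := by
    rw [mink_add_left, mink_add_left, hFΓ, hΓΓ, hFE, hΓE]
  exact eq_of_mink_eq positive same_product (hΓΓ.trans hΓE.symm) (hEE.trans hΓE.symm)

/-- Proposition 3.7 (case k = 11, component of genus 2 and self-intersection −2):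
`Γ₁ ≡ −2K_W + F + 2G + N₀`. -/
theorem case11_genus2_neg2_component (n : ℕ) (K D F G N Γ : Fin (n + 1) → ℝ)
    (hKK : mink n K K = -4) (hKD : mink n K D = 0) (hDD : mink n D D = 14)
    (hKF : mink n K F = -2) (hDF : mink n D F = 4) (hFF : mink n F F = 0)
    (hKG : mink n K G = -1) (hDG : mink n D G = 1) (hGG : mink n G G = -1)
    (hFG : mink n F G = 0)
    (hKN : mink n K N = 0) (hDN : mink n D N = 0) (hFN : mink n F N = 0)
    (hGN : mink n G N = 1) (hNN : mink n N N = -2)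
    (hKΓ : mink n K Γ = 4) (hDΓ : mink n D Γ = 6) (hFΓ : mink n F Γ = 4)
    (hGΓ : mink n G Γ = 1) (hNΓ : mink n N Γ = 0) (hΓΓ : mink n Γ Γ = -2) :
    Γ = -(2 • K) + F + 2 • G + N :=
  case11_genus2_neg2_component_general n K F G N Γ hKK hKF hFF hKG hGG hFG hKN hFN hGN hNN
    hKΓ hFΓ hGΓ hNΓ hΓΓ
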